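/- The discrete Hilbert transform is bounded on ℓ^p(ℤ) for 1 < p < ∞: the convolution operator with the sequence (1/j)_{j≠0} (and 0 at j = 0) maps ℓ^p(ℤ) boundedly to ℓ^p(ℤ). -/

import Mathlib

open Real

/-!
The numbers `1 / n` are the Fourier coefficients of a sawtooth function bounded by `π`, so the
finite sections of the kernel `(m - n)⁻¹` have norm at most `π` on `ℓ²`. Cotlar's identity, a
summed-up partial fraction decomposition, expresses `(H a)²` through `H (a * H a)` and absolutely
convergent terms; a bound `C` on `ℓ^p` thereby becomes a bound `2 C + π` on `ℓ^(2p)`, and the norm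
on `ℓ^(2^k)` is at most `(2^k - 1) π`. The kernel is antisymmetric, so the same bound holds for the
conjugate exponent, and Riesz–Thorin interpolation covers everything in between. The bounds do not
depend on the finite section, hence survive the passage to the limit.
-/

open AddCircle Complex.HadamardThreeLines Filter Matrix MeasureTheory Topology

open scoped ComplexConjugate ENNReal

section EllpNorm

variable {ι E R : Type*} [Fintype ι] [SeminormedAddCommGroup E] {p q r : ℝ}

/-- The `ℓ^p` norm of a vector with finitely many entries, for a real exponent `p`. -/
noncomputable def ellpNorm (p : ℝ) (a : ι → E) : ℝ :=
  (∑ i, ‖a i‖ ^ p) ^ p⁻¹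

lemma ellpNorm_nonneg (p : ℝ) (a : ι → E) : 0 ≤ ellpNorm p a := by
  unfold ellpNorm; positivity

lemma ellpNorm_rpow (hp : p ≠ 0) (a : ι → E) : ellpNorm p a ^ p = ∑ i, ‖a i‖ ^ p :=
  Real.rpow_inv_rpow (by positivity) hp

lemma ellpNorm_le_mul_ellpNorm_iff {κ F : Type*} [Fintype κ] [SeminormedAddCommGroup F] {C : ℝ}
    (hp : 0 < p) (hC : 0 ≤ C) {a : ι → E} {b : κ → F} :
    ellpNorm p a ≤ C * ellpNorm p b ↔ ∑ i, ‖a i‖ ^ p ≤ C ^ p * ∑ j, ‖b j‖ ^ p := by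
  rw [← Real.rpow_le_rpow_iff (ellpNorm_nonneg p a) (mul_nonneg hC (ellpNorm_nonneg p b)) hp,
    Real.mul_rpow hC (ellpNorm_nonneg p b), ellpNorm_rpow hp.ne', ellpNorm_rpow hp.ne']

lemma ellpNorm_add_le (hp : 1 ≤ p) (a b : ι → E) :
    ellpNorm p (a + b) ≤ ellpNorm p a + ellpNorm p b := by
  calc ellpNorm p (a + b) ≤ (∑ i, (‖a i‖ + ‖b i‖) ^ p) ^ p⁻¹ := by
        unfold ellpNorm
        gcongr with i
        exact norm_add_le _ _
    _ ≤ ellpNorm p a + ellpNorm p b := by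
        simpa only [ellpNorm, one_div] using Real.Lp_add_le_of_nonneg Finset.univ hp
          (fun i _ => norm_nonneg (a i)) fun i _ => norm_nonneg (b i)

lemma ellpNorm_mul_le [NonUnitalSeminormedRing R] (h : p.HolderTriple q r) (a b : ι → R) :
    ellpNorm r (a * b) ≤ ellpNorm p a * ellpNorm q b := by
  have hr := h.pos'
  calc ellpNorm r (a * b) ≤ (∑ i, (‖a i‖ * ‖b i‖) ^ r) ^ r⁻¹ := by
        unfold ellpNorm
        gcongr with i
        exact norm_mul_le _ _
    _ ≤ ((∑ i, ‖a i‖ ^ p) ^ (r / p) * (∑ i, ‖b i‖ ^ q) ^ (r / q)) ^ r⁻¹ := by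
        gcongr
        exact Real.Lr_rpow_le_Lp_mul_Lq_of_nonneg Finset.univ h
          (fun i _ => norm_nonneg (a i)) fun i _ => norm_nonneg (b i)
    _ = ellpNorm p a * ellpNorm q b := by
        rw [Real.mul_rpow (by positivity) (by positivity), ← Real.rpow_mul (by positivity),
          ← Real.rpow_mul (by positivity), div_mul_eq_mul_div, div_mul_eq_mul_div,
          mul_inv_cancel₀ hr.ne', one_div, one_div, ellpNorm, ellpNorm]

lemma ellpNorm_mul_self [NonUnitalSeminormedRing R] [NormMulClass R] (p : ℝ) (a : ι → R) :
    ellpNorm p (a * a) = ellpNorm (2 * p) a ^ 2 := by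
  have hentry (i : ι) : ‖(a * a) i‖ ^ p = ‖a i‖ ^ (2 * p) := by
    rw [Pi.mul_apply, norm_mul, ← sq, ← Real.rpow_natCast_mul (norm_nonneg _), Nat.cast_ofNat]
  simp only [ellpNorm, hentry]
  rw [← Real.rpow_mul_natCast (by positivity)]
  congr 1
  rw [mul_inv, Nat.cast_ofNat, mul_right_comm, inv_mul_cancel₀ two_ne_zero, one_mul]

lemma norm_dotProduct_le_ellpNorm_mul_ellpNorm [NonUnitalSeminormedRing R] (h : p.HolderConjugate q)
    (a b : ι → R) : ‖a ⬝ᵥ b‖ ≤ ellpNorm p a * ellpNorm q b :=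
  calc ‖a ⬝ᵥ b‖ ≤ ∑ i, ‖(a * b) i‖ := norm_sum_le _ _
    _ = ellpNorm 1 (a * b) := by simp only [ellpNorm, Real.rpow_one, inv_one]
    _ ≤ ellpNorm p a * ellpNorm q b := ellpNorm_mul_le h a b

end EllpNorm

section PhasePow

/-- The complex power `|w| ^ z` carrying the phase of `w`, written so that it vanishes at `w = 0`
and is therefore entire in `z` for every `w`. -/
noncomputable def phasePow (w z : ℂ) : ℂ :=
  w * (‖w‖ : ℂ) ^ (z - 1)

lemma phasePow_one (w : ℂ) : phasePow w 1 = w := by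
  simp [phasePow]

lemma norm_phasePow (w : ℂ) {z : ℂ} (hz : z.re ≠ 0) : ‖phasePow w z‖ = ‖w‖ ^ z.re := by
  rcases eq_or_ne w 0 with rfl | hw
  · simp [phasePow, Real.zero_rpow hz]
  · have hw' : 0 < ‖w‖ := norm_pos_iff.2 hw
    rw [phasePow, norm_mul, Complex.norm_cpow_eq_rpow_re_of_pos hw', Complex.sub_re,
      Complex.one_re, Real.rpow_sub_one hw'.ne', mul_div_cancel₀ _ hw'.ne']

lemma differentiable_phasePow (w : ℂ) : Differentiable ℂ (phasePow w) := by
  rcases eq_or_ne w 0 with rfl | hw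
  · have : phasePow 0 = fun _ => 0 := funext fun z => zero_mul _
    rw [this]
    exact differentiable_const 0
  · have hw' : (‖w‖ : ℂ) ≠ 0 := by exact_mod_cast norm_ne_zero_iff.2 hw
    exact ((differentiable_id.sub_const 1).const_cpow (.inl hw')).const_mul w

lemma conj_phasePow_mul_self (w : ℂ) {x : ℝ} (hx : x + 1 ≠ 0) :
    conj (phasePow w x) * w = (‖w‖ ^ (x + 1) : ℝ) := by
  rcases eq_or_ne w 0 with rfl | hw
  · simp [Real.zero_rpow hx]
  · have hw' : 0 < ‖w‖ := norm_pos_iff.2 hw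
    have hreal : (‖w‖ : ℂ) ^ ((x : ℂ) - 1) = (‖w‖ ^ (x - 1) : ℝ) := by
      rw [Complex.ofReal_cpow (norm_nonneg w)]; push_cast; rfl
    have hexp : ‖w‖ ^ (x + 1) = ‖w‖ ^ 2 * ‖w‖ ^ (x - 1) := by
      rw [← Real.rpow_natCast, ← Real.rpow_add hw']; congr 1; push_cast; ring
    rw [phasePow, hreal, map_mul, Complex.conj_ofReal, mul_right_comm, Complex.conj_mul', hexp]
    push_cast
    rfl

lemma ellpNorm_phasePow {ι : Type*} [Fintype ι] {p r : ℝ} (hp : 0 < p) (hr : 0 < r) (a : ι → ℂ)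
    {z : ℂ} (hz : z.re = p / r) :
    ellpNorm r (fun i => phasePow (a i) z) = ellpNorm p a ^ (p / r) := by
  have hz0 : z.re ≠ 0 := by rw [hz]; positivity
  simp only [ellpNorm, norm_phasePow _ hz0, ← Real.rpow_mul (norm_nonneg _)]
  rw [← Real.rpow_mul (by positivity), hz, div_mul_cancel₀ _ hr.ne', ← mul_div_assoc,
    inv_mul_cancel₀ hp.ne', one_div]

end PhasePow

section MatrixBounds

variable {ι κ : Type*} [Fintype ι] [Fintype κ] {M : Matrix ι κ ℂ} {p q C : ℝ}

/-- The matrix `M` maps `ℓ^p` to `ℓ^p` with operator norm at most `C`. -/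
def LpBound (M : Matrix ι κ ℂ) (p C : ℝ) : Prop :=
  ∀ a : κ → ℂ, ellpNorm p (M *ᵥ a) ≤ C * ellpNorm p a

/-- The bilinear form of the matrix `M` has norm at most `C` on `ℓ^q × ℓ^p`. For conjugate
exponents this is the dual description of `LpBound M p C`, which is the one that interpolates. -/
def FormBound (M : Matrix ι κ ℂ) (p q C : ℝ) : Prop :=
  ∀ (b : ι → ℂ) (a : κ → ℂ), ‖b ⬝ᵥ M *ᵥ a‖ ≤ C * (ellpNorm p a * ellpNorm q b)

lemma LpBound.formBound (hpq : p.HolderConjugate q) (hM : LpBound M p C) : FormBound M p q C :=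
  fun b a =>
  calc ‖b ⬝ᵥ M *ᵥ a‖ ≤ ellpNorm q b * ellpNorm p (M *ᵥ a) :=
        norm_dotProduct_le_ellpNorm_mul_ellpNorm hpq.symm _ _
    _ ≤ ellpNorm q b * (C * ellpNorm p a) := mul_le_mul_of_nonneg_left (hM a) (ellpNorm_nonneg q b)
    _ = C * (ellpNorm p a * ellpNorm q b) := by ring

/-- The extremal `b` is the conjugate phase of `a` times `|a| ^ (p - 1)`. -/
lemma ellpNorm_le_of_forall_norm_dotProduct_le (hpq : p.HolderConjugate q) {a : ι → ℂ} (hC : 0 ≤ C)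
    (h : ∀ b : ι → ℂ, ‖b ⬝ᵥ a‖ ≤ C * ellpNorm q b) : ellpNorm p a ≤ C := by
  rcases (ellpNorm_nonneg p a).eq_or_lt with ha | ha
  · rwa [← ha]
  set b : ι → ℂ := fun i => phasePow (a i) (p - 1 : ℝ)
  have hdot : star b ⬝ᵥ a = (ellpNorm p a ^ p : ℝ) := by
    rw [ellpNorm_rpow hpq.ne_zero, Complex.ofReal_sum]
    refine Finset.sum_congr rfl fun i _ => ?_
    rw [Pi.star_apply, ← starRingEnd_apply, conj_phasePow_mul_self _ (by simpa using hpq.ne_zero),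
      sub_add_cancel]
  have hb : ellpNorm q (star b) = ellpNorm p a ^ (p - 1) := by
    rw [← hpq.div_conj_eq_sub_one, ← ellpNorm_phasePow hpq.pos hpq.symm.pos a (z := (p - 1 : ℝ))
      (by rw [Complex.ofReal_re, hpq.div_conj_eq_sub_one])]
    simp only [ellpNorm, b, Pi.star_apply, norm_star]
  refine le_of_mul_le_mul_right ?_ (Real.rpow_pos_of_pos ha (p - 1))
  calc ellpNorm p a * ellpNorm p a ^ (p - 1) = ‖star b ⬝ᵥ a‖ := by
        rw [hdot, Complex.norm_of_nonneg (by positivity), Real.rpow_sub_one ha.ne',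
          mul_div_cancel₀ _ ha.ne']
    _ ≤ C * ellpNorm p a ^ (p - 1) := hb ▸ h (star b)

lemma FormBound.lpBound (hpq : p.HolderConjugate q) (hC : 0 ≤ C) (hM : FormBound M p q C) :
    LpBound M p C := fun a =>
  ellpNorm_le_of_forall_norm_dotProduct_le hpq (mul_nonneg hC (ellpNorm_nonneg p a)) fun b => by
    simpa only [mul_assoc] using hM b a

lemma FormBound.transpose (hM : FormBound M p q C) : FormBound Mᵀ q p C := fun b a => by
  rw [mulVec_transpose, dotProduct_comm, ← dotProduct_mulVec, mul_comm (ellpNorm q a)]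
  exact hM a b

lemma FormBound.neg (hM : FormBound M p q C) : FormBound (-M) p q C := fun b a => by
  simpa only [neg_mulVec, dotProduct_neg, norm_neg] using hM b a

lemma lpBound_of_schur_test {σ : ℝ} (hp : 1 ≤ p) (hσ : 0 ≤ σ) (hrow : ∀ i, ∑ j, ‖M i j‖ ≤ σ)
    (hcol : ∀ j, ∑ i, ‖M i j‖ ≤ σ) : LpBound M p σ := fun a => by
  have hp0 : 0 < p := one_pos.trans_le hp
  have hentry (i : ι) : ‖(M *ᵥ a) i‖ ^ p ≤ σ ^ (p - 1) * ∑ j, ‖M i j‖ * ‖a j‖ ^ p :=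
    calc ‖(M *ᵥ a) i‖ ^ p ≤ (∑ j, ‖M i j‖ * ‖a j‖) ^ p := by
          gcongr
          exact norm_sum_le_of_le _ fun j _ => norm_mul_le _ _
      _ ≤ ((∑ j, ‖M i j‖) ^ (1 - p⁻¹) * (∑ j, ‖M i j‖ * ‖a j‖ ^ p) ^ p⁻¹) ^ p := by
          gcongr
          exact Real.inner_le_weight_mul_Lp_of_nonneg _ hp _ _ (fun j => norm_nonneg _)
            fun j => norm_nonneg _
      _ = (∑ j, ‖M i j‖) ^ (p - 1) * ∑ j, ‖M i j‖ * ‖a j‖ ^ p := by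
          rw [Real.mul_rpow (by positivity) (by positivity), Real.rpow_inv_rpow (by positivity)
            hp0.ne', ← Real.rpow_mul (by positivity), sub_mul, one_mul, inv_mul_cancel₀ hp0.ne']
      _ ≤ σ ^ (p - 1) * ∑ j, ‖M i j‖ * ‖a j‖ ^ p := by
          gcongr
          exact hrow i
  rw [ellpNorm_le_mul_ellpNorm_iff hp0 hσ]
  calc ∑ i, ‖(M *ᵥ a) i‖ ^ p ≤ ∑ i, σ ^ (p - 1) * ∑ j, ‖M i j‖ * ‖a j‖ ^ p :=
        Finset.sum_le_sum fun i _ => hentry i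
    _ = σ ^ (p - 1) * ∑ j, (∑ i, ‖M i j‖) * ‖a j‖ ^ p := by
        rw [← Finset.mul_sum, Finset.sum_comm]
        simp only [Finset.sum_mul]
    _ ≤ σ ^ (p - 1) * ∑ j, σ * ‖a j‖ ^ p := by
        gcongr with j
        exact hcol j
    _ = σ ^ p * ∑ j, ‖a j‖ ^ p := by
        rw [← Finset.mul_sum, ← mul_assoc, ← Real.rpow_add_one' hσ (by simpa using hp0.ne'),
          sub_add_cancel]

end MatrixBounds

section RieszThorin

variable {ι κ : Type*} {u v : ℝ}

/-- The analytic curve of vectors along which a vector `a` is deformed in the proof of the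
Riesz–Thorin theorem: entrywise powers of `a`, with an exponent moving affinely from `u` at `z = 0`
to `v` at `z = 1`. -/
noncomputable def phaseCurve (a : ι → ℂ) (u v : ℝ) (z : ℂ) : ι → ℂ :=
  fun i => phasePow (a i) ((1 - z) * u + z * v)

lemma re_segment (u v : ℝ) (z : ℂ) : ((1 - z) * u + z * v).re = (1 - z.re) * u + z.re * v := by
  simp

lemma phaseCurve_eq_self (a : ι → ℂ) {θ : ℝ} (h : (1 - θ) * u + θ * v = 1) :
    phaseCurve a u v θ = a := by
  have hexp : (1 - θ : ℂ) * u + θ * v = 1 := by exact_mod_cast h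
  funext i
  rw [phaseCurve, hexp, phasePow_one]

lemma differentiable_phaseCurve_apply (a : ι → ℂ) (u v : ℝ) (i : ι) :
    Differentiable ℂ fun z => phaseCurve a u v z i :=
  (differentiable_phasePow (a i)).comp (by fun_prop)

lemma ellpNorm_phaseCurve [Fintype ι] {p r : ℝ} (hp : 0 < p) (hr : 0 < r) (a : ι → ℂ) {z : ℂ}
    (hz : (1 - z.re) * u + z.re * v = p / r) :
    ellpNorm r (phaseCurve a u v z) = ellpNorm p a ^ (p / r) :=
  ellpNorm_phasePow hp hr a ((re_segment u v z).trans hz)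

lemma norm_phaseCurve_le (a : ι → ℂ) (hu : 0 < u) (hv : 0 < v) {z : ℂ}
    (hz : z ∈ verticalClosedStrip 0 1) (i : ι) :
    ‖phaseCurve a u v z i‖ ≤ max (‖a i‖ ^ u) (‖a i‖ ^ v) := by
  obtain ⟨hz0, hz1⟩ : 0 ≤ z.re ∧ z.re ≤ 1 := hz
  have hpos : 0 < (1 - z.re) * u + z.re * v :=
    convex_Ioi (0 : ℝ) hu hv (sub_nonneg.2 hz1) hz0 (sub_add_cancel 1 _)
  rw [phaseCurve, norm_phasePow _ (by rw [re_segment]; exact hpos.ne'), re_segment]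
  rcases eq_or_ne (a i) 0 with ha | ha
  · rw [ha, norm_zero, Real.zero_rpow hpos.ne']
    positivity
  · exact (convexOn_rpow_left (norm_pos_iff.2 ha)).le_on_segment' (Set.mem_univ u)
      (Set.mem_univ v) (sub_nonneg.2 hz1) hz0 (sub_add_cancel 1 _)

lemma rpow_mul_rpow_of_segment_eq_one {N θ : ℝ} (hN : 0 ≤ N) (h : (1 - θ) * u + θ * v = 1) :
    (N ^ u) ^ (1 - θ) * (N ^ v) ^ θ = N := by
  have hexp : u * (1 - θ) + v * θ = 1 := by linear_combination h
  rw [← Real.rpow_mul hN, ← Real.rpow_mul hN, ← Real.rpow_add' hN (by simp [hexp]), hexp,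
    Real.rpow_one]

variable [Fintype ι] [Fintype κ] {M : Matrix ι κ ℂ}

lemma bddAbove_norm_form_phaseCurve (M : Matrix ι κ ℂ) (b : ι → ℂ) (a : κ → ℂ) {s t : ℝ}
    (hs : 0 < s) (ht : 0 < t) (hu : 0 < u) (hv : 0 < v) :
    BddAbove ((norm ∘ fun z => phaseCurve b s t z ⬝ᵥ M *ᵥ phaseCurve a u v z) ''
      verticalClosedStrip 0 1) := by
  refine ⟨∑ i, max (‖b i‖ ^ s) (‖b i‖ ^ t) * ∑ j, ‖M i j‖ * max (‖a j‖ ^ u) (‖a j‖ ^ v), ?_⟩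
  rintro _ ⟨z, hz, rfl⟩
  refine norm_sum_le_of_le _ fun i _ => (norm_mul_le _ _).trans ?_
  gcongr
  · exact norm_phaseCurve_le b hs ht hz i
  · refine norm_sum_le_of_le _ fun j _ => (norm_mul_le _ _).trans ?_
    gcongr
    exact norm_phaseCurve_le a hu hv hz j

lemma diffContOnCl_form_phaseCurve (M : Matrix ι κ ℂ) (b : ι → ℂ) (a : κ → ℂ) (s t u v : ℝ)
    (S : Set ℂ) : DiffContOnCl ℂ (fun z => phaseCurve b s t z ⬝ᵥ M *ᵥ phaseCurve a u v z) S := by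
  have hb := differentiable_phaseCurve_apply b s t
  have ha := differentiable_phaseCurve_apply a u v
  refine Differentiable.diffContOnCl ?_
  simp only [mulVec, dotProduct]
  fun_prop

lemma FormBound.norm_form_phaseCurve_le {p q r r' C : ℝ} (hM : FormBound M r r' C) (hp : 0 < p)
    (hq : 0 < q) (hr : 0 < r) (hr' : 0 < r') (b : ι → ℂ) (a : κ → ℂ) {s t : ℝ} {z : ℂ}
    (hst : (1 - z.re) * s + z.re * t = q / r') (huv : (1 - z.re) * u + z.re * v = p / r) :
    ‖phaseCurve b s t z ⬝ᵥ M *ᵥ phaseCurve a u v z‖ ≤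
      C * (ellpNorm p a ^ (p / r) * ellpNorm q b ^ (q / r')) := by
  rw [← ellpNorm_phaseCurve hp hr a huv, ← ellpNorm_phaseCurve hq hr' b hst]
  exact hM _ _

/-- The Riesz–Thorin theorem, by Hadamard's three lines theorem on the analytic family
`phaseCurve b ⬝ᵥ M *ᵥ phaseCurve a`. -/
theorem FormBound.interpolate {p₀ p₁ p q₀ q₁ q C₀ C₁ θ : ℝ} (h₀ : FormBound M p₀ q₀ C₀)
    (h₁ : FormBound M p₁ q₁ C₁) (hC₀ : 0 ≤ C₀) (hC₁ : 0 ≤ C₁) (hp₀ : 0 < p₀) (hp₁ : 0 < p₁)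
    (hq₀ : 0 < q₀) (hq₁ : 0 < q₁) (hp : 0 < p) (hq : 0 < q) (hθ : θ ∈ Set.Icc 0 1)
    (hpθ : (1 - θ) * p₀⁻¹ + θ * p₁⁻¹ = p⁻¹) (hqθ : (1 - θ) * q₀⁻¹ + θ * q₁⁻¹ = q⁻¹) :
    FormBound M p q (C₀ ^ (1 - θ) * C₁ ^ θ) := fun b a => by
  have hpθ' : (1 - θ) * (p / p₀) + θ * (p / p₁) = 1 := by
    linear_combination p * hpθ + mul_inv_cancel₀ hp.ne'
  have hqθ' : (1 - θ) * (q / q₀) + θ * (q / q₁) = 1 := by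
    linear_combination q * hqθ + mul_inv_cancel₀ hq.ne'
  have ha := ellpNorm_nonneg p a
  have hb := ellpNorm_nonneg q b
  have hlines := norm_le_interp_of_mem_verticalClosedStrip₀₁'
    (fun z => phaseCurve b (q / q₀) (q / q₁) z ⬝ᵥ M *ᵥ phaseCurve a (p / p₀) (p / p₁) z)
    (z := θ) hθ (diffContOnCl_form_phaseCurve ..)
    (bddAbove_norm_form_phaseCurve M b a (by positivity) (by positivity) (by positivity)
      (by positivity))
    (fun z (hz : z.re = 0) =>
      h₀.norm_form_phaseCurve_le hp hq hp₀ hq₀ b a (by simp [hz]) (by simp [hz]))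
    (fun z (hz : z.re = 1) =>
      h₁.norm_form_phaseCurve_le hp hq hp₁ hq₁ b a (by simp [hz]) (by simp [hz]))
  simp only [phaseCurve_eq_self b hqθ', phaseCurve_eq_self a hpθ', Complex.ofReal_re] at hlines
  refine hlines.trans_eq ?_
  rw [Real.mul_rpow hC₀ (by positivity), Real.mul_rpow hC₁ (by positivity),
    Real.mul_rpow (by positivity) (by positivity), Real.mul_rpow (by positivity) (by positivity)]
  linear_combination (C₀ ^ (1 - θ) * C₁ ^ θ) *
    ((ellpNorm q b ^ (q / q₀)) ^ (1 - θ) * (ellpNorm q b ^ (q / q₁)) ^ θ *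
      rpow_mul_rpow_of_segment_eq_one ha hpθ' +
      ellpNorm p a * rpow_mul_rpow_of_segment_eq_one hb hqθ')

end RieszThorin

section Cotlar

variable {ι K : Type*} [Field K]

/-- The matrix of the discrete Hilbert transform with nodes `x i`. Its diagonal vanishes because
`0⁻¹ = 0`. -/
def hilbertMatrix (x : ι → K) : Matrix ι ι K :=
  .of fun i j => (x i - x j)⁻¹

lemma hilbertMatrix_transpose (x : ι → K) : (hilbertMatrix x)ᵀ = -hilbertMatrix x := by
  ext i j
  rw [Matrix.neg_apply, transpose_apply, hilbertMatrix, of_apply, of_apply, ← inv_neg, neg_sub]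

/-- For distinct `x`, `y`, `z` this is the partial fraction decomposition; the remaining terms
account for coincidences. -/
lemma inv_sub_mul_inv_sub [DecidableEq K] (x y z : K) :
    (x - y)⁻¹ * (x - z)⁻¹ = (x - y)⁻¹ * (y - z)⁻¹ + (x - z)⁻¹ * (z - y)⁻¹ +
      (if y = z then (x - y)⁻¹ * (x - y)⁻¹ else 0) + (if x = y then (x - z)⁻¹ * (x - z)⁻¹ else 0) +
      if x = z then (x - y)⁻¹ * (x - y)⁻¹ else 0 := by
  rcases eq_or_ne x y with rfl | hxy
  · rcases eq_or_ne x z with rfl | hxz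
    · simp
    · rw [← neg_sub x z, inv_neg]
      simp [hxz]
  rcases eq_or_ne x z with rfl | hxz
  · rw [← neg_sub x y, inv_neg]
    simp [hxy, hxy.symm]
  rcases eq_or_ne y z with rfl | hyz
  · simp [hxy]
  rw [← neg_sub y z]
  have hxy' := sub_ne_zero.2 hxy
  have hxz' := sub_ne_zero.2 hxz
  have hyz' := sub_ne_zero.2 hyz
  simp only [hxy, hxz, hyz, if_false, add_zero]
  field_simp
  ring

variable [Fintype ι]

lemma hilbertMatrix_cotlar_identity {x : ι → K} (hx : Function.Injective x) (a b : ι → K) :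
    let H := hilbertMatrix x
    let S := H ⊙ H
    (H *ᵥ a) * (H *ᵥ b) = H *ᵥ (a * (H *ᵥ b)) + H *ᵥ (b * (H *ᵥ a)) + S *ᵥ (a * b) +
      a * (S *ᵥ b) + b * (S *ᵥ a) := by
  classical
  intro H S
  ext i
  have hfst : (H *ᵥ (a * (H *ᵥ b))) i =
      ∑ j, ∑ k, (x i - x j)⁻¹ * (x j - x k)⁻¹ * (a j * b k) := by
    refine Finset.sum_congr rfl fun j _ => ?_
    simp only [Pi.mul_apply, mulVec, dotProduct, Finset.mul_sum, H, hilbertMatrix, of_apply]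
    exact Finset.sum_congr rfl fun k _ => by ring
  have hsnd : (H *ᵥ (b * (H *ᵥ a))) i =
      ∑ j, ∑ k, (x i - x k)⁻¹ * (x k - x j)⁻¹ * (a j * b k) := by
    rw [Finset.sum_comm]
    refine Finset.sum_congr rfl fun k _ => ?_
    simp only [Pi.mul_apply, mulVec, dotProduct, Finset.mul_sum, H, hilbertMatrix, of_apply]
    exact Finset.sum_congr rfl fun j _ => by ring
  have hdiag : (S *ᵥ (a * b)) i =
      ∑ j, ∑ k, (if j = k then (x i - x j)⁻¹ * (x i - x j)⁻¹ else 0) * (a j * b k) := by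
    simp [S, H, hilbertMatrix, mulVec, dotProduct, ite_mul]
  have hleft : (a * (S *ᵥ b)) i =
      ∑ j, ∑ k, (if i = j then (x i - x k)⁻¹ * (x i - x k)⁻¹ else 0) * (a j * b k) := by
    rw [Finset.sum_comm]
    simp [S, H, hilbertMatrix, mulVec, dotProduct, ite_mul, Finset.mul_sum, mul_left_comm]
  have hright : (b * (S *ᵥ a)) i =
      ∑ j, ∑ k, (if i = k then (x i - x j)⁻¹ * (x i - x j)⁻¹ else 0) * (a j * b k) := by
    simp [S, H, hilbertMatrix, mulVec, dotProduct, Finset.mul_sum, mul_left_comm, mul_comm (a _)]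
  calc ((H *ᵥ a) * (H *ᵥ b)) i
      = ∑ j, ∑ k, (x i - x j)⁻¹ * (x i - x k)⁻¹ * (a j * b k) := by
        simp only [Pi.mul_apply, mulVec, dotProduct, Finset.sum_mul_sum, H, hilbertMatrix, of_apply]
        exact Finset.sum_congr rfl fun j _ => Finset.sum_congr rfl fun k _ => by ring
    _ = _ := by
        simp only [Pi.add_apply, hfst, hsnd, hdiag, hleft, hright, ← Finset.sum_add_distrib,
          ← add_mul]
        refine Finset.sum_congr rfl fun j _ => Finset.sum_congr rfl fun k _ => ?_
        rw [inv_sub_mul_inv_sub (x i) (x j)]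
        simp only [hx.eq_iff]

end Cotlar

section Doubling

variable {ι : Type*} [Fintype ι] {x : ι → ℂ} {p C σ : ℝ}

lemma lpBound_hilbertMatrix_hadamard_self (hp : 1 ≤ p) (hσ : 0 ≤ σ)
    (hsum : ∀ i, ∑ j, ‖(x i - x j)⁻¹‖ ^ 2 ≤ σ) :
    LpBound (hilbertMatrix x ⊙ hilbertMatrix x) p σ := by
  refine lpBound_of_schur_test hp hσ (fun i => ?_) fun j => ?_
  · simpa only [hilbertMatrix, hadamard_apply, of_apply, ← sq, norm_pow] using hsum i
  · simpa only [hilbertMatrix, hadamard_apply, of_apply, ← sq, norm_pow, norm_inv,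
      norm_sub_rev (x j)] using hsum j

lemma le_of_sq_le_two_mul_mul_add {X Y s : ℝ} (hC : 0 ≤ C) (hY : 0 ≤ Y) (hs : 0 ≤ s)
    (h : X ^ 2 ≤ 2 * C * (X * Y) + s ^ 2 * Y ^ 2) : X ≤ (2 * C + s) * Y := by
  have hsq : (X - C * Y) ^ 2 ≤ ((C + s) * Y) ^ 2 := by
    nlinarith [mul_nonneg (mul_nonneg hC hs) (sq_nonneg Y)]
  linarith [abs_le_of_sq_le_sq' hsq (by positivity) |>.2]

lemma LpBound.hilbertMatrix_two_mul (hx : Function.Injective x) (hp : 1 ≤ p) (hC : 0 ≤ C)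
    (hσ : 0 ≤ σ) (hsum : ∀ i, ∑ j, ‖(x i - x j)⁻¹‖ ^ 2 ≤ σ) (hH : LpBound (hilbertMatrix x) p C) :
    LpBound (hilbertMatrix x) (2 * p) (2 * C + √(3 * σ)) := fun a => by
  set H := hilbertMatrix x
  set X := ellpNorm (2 * p) (H *ᵥ a)
  set Y := ellpNorm (2 * p) a
  have hhölder : (2 * p).HolderTriple (2 * p) p := by
    refine ⟨?_, by positivity, by positivity⟩
    rw [← two_mul, mul_inv, mul_inv_cancel_left₀ two_ne_zero]
  have hY : 0 ≤ Y := ellpNorm_nonneg _ _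
  have hmixed : ellpNorm p (H *ᵥ (a * (H *ᵥ a))) ≤ C * (Y * X) :=
    (hH _).trans (mul_le_mul_of_nonneg_left (ellpNorm_mul_le hhölder a _) hC)
  have hdiag : ellpNorm p ((H ⊙ H) *ᵥ (a * a)) ≤ σ * Y ^ 2 :=
    ellpNorm_mul_self p a ▸ lpBound_hilbertMatrix_hadamard_self hp hσ hsum _
  have hprod : ellpNorm p (a * ((H ⊙ H) *ᵥ a)) ≤ Y * (σ * Y) :=
    (ellpNorm_mul_le hhölder a _).trans (mul_le_mul_of_nonneg_left
      (lpBound_hilbertMatrix_hadamard_self (by linarith) hσ hsum a) hY)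
  refine le_of_sq_le_two_mul_mul_add hC hY (Real.sqrt_nonneg _) ?_
  rw [Real.sq_sqrt (by positivity), ← ellpNorm_mul_self p (H *ᵥ a),
    hilbertMatrix_cotlar_identity hx a a]
  linarith [ellpNorm_add_le hp
      (H *ᵥ (a * (H *ᵥ a)) + H *ᵥ (a * (H *ᵥ a)) + (H ⊙ H) *ᵥ (a * a) + a * ((H ⊙ H) *ᵥ a))
      (a * ((H ⊙ H) *ᵥ a)),
    ellpNorm_add_le hp (H *ᵥ (a * (H *ᵥ a)) + H *ᵥ (a * (H *ᵥ a)) + (H ⊙ H) *ᵥ (a * a))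
      (a * ((H ⊙ H) *ᵥ a)),
    ellpNorm_add_le hp (H *ᵥ (a * (H *ᵥ a)) + H *ᵥ (a * (H *ᵥ a))) ((H ⊙ H) *ᵥ (a * a)),
    ellpNorm_add_le hp (H *ᵥ (a * (H *ᵥ a))) (H *ᵥ (a * (H *ᵥ a)))]

end Doubling

section IntegerNodes

variable {ι : Type*} [Fintype ι] {x : ι → ℤ}

lemma hasSum_int_inv_sq : HasSum (fun n : ℤ => ((n : ℝ) ^ 2)⁻¹) (π ^ 2 / 3) := by
  have hnat : HasSum (fun n : ℕ => ((n : ℝ) ^ 2)⁻¹) (π ^ 2 / 6) := by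
    simpa only [one_div] using hasSum_zeta_two
  have hneg : HasSum (fun n : ℕ => (((-n : ℤ) : ℝ) ^ 2)⁻¹) (π ^ 2 / 6) := by
    simpa only [Int.cast_neg, Int.cast_natCast, neg_sq] using hnat
  have hint := HasSum.of_nat_of_neg (f := fun n : ℤ => ((n : ℝ) ^ 2)⁻¹) hnat hneg
  rwa [Int.cast_zero, zero_pow two_ne_zero, _root_.inv_zero, sub_zero,
    show π ^ 2 / 6 + π ^ 2 / 6 = π ^ 2 / 3 by ring] at hint

lemma sum_norm_inv_intCast_sub_sq_le (hx : Function.Injective x) (m : ℤ) :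
    ∑ j, ‖((m : ℂ) - x j)⁻¹‖ ^ 2 ≤ π ^ 2 / 3 := by
  have hentry (j : ι) : ‖((m : ℂ) - x j)⁻¹‖ ^ 2 = (((m - x j : ℤ) : ℝ) ^ 2)⁻¹ := by
    rw [← Int.cast_sub, norm_inv, Complex.norm_intCast, inv_pow, sq_abs]
  calc ∑ j, ‖((m : ℂ) - x j)⁻¹‖ ^ 2
      = ∑ n ∈ Finset.univ.map ⟨fun j => m - x j, sub_right_injective.comp hx⟩,
          ((n : ℝ) ^ 2)⁻¹ := by
        simp only [hentry, Finset.sum_map, Function.Embedding.coeFn_mk]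
    _ ≤ π ^ 2 / 3 := sum_le_hasSum _ (fun n _ => by positivity) hasSum_int_inv_sq

end IntegerNodes

section Toeplitz

variable {ι : Type*} [Fintype ι]

lemma norm_sum_smul_sq_of_orthonormal {E : Type*} [NormedAddCommGroup E] [InnerProductSpace ℂ E]
    {v : ι → E} (hv : Orthonormal ℂ v) (a : ι → ℂ) : ‖∑ j, a j • v j‖ ^ 2 = ∑ j, ‖a j‖ ^ 2 := by
  rw [← inner_self_eq_norm_sq (𝕜 := ℂ), hv.inner_sum a a Finset.univ]
  simp only [Complex.conj_mul', map_sum]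
  norm_cast

lemma lpBound_two_of_orthonormal {E : Type*} [NormedAddCommGroup E] [InnerProductSpace ℂ E]
    {v : ι → E} (hv : Orthonormal ℂ v) (T : E →ₗ[ℂ] E) {C : ℝ} (hC : 0 ≤ C)
    (hT : ∀ g, ‖T g‖ ≤ C * ‖g‖) : LpBound (of fun i j => inner ℂ (v i) (T (v j))) 2 C := fun a => by
  have hentry (i : ι) : ((of fun i j => inner ℂ (v i) (T (v j))) *ᵥ a) i =
      inner ℂ (v i) (T (∑ j, a j • v j)) := by
    simp only [mulVec, dotProduct, of_apply, map_sum, map_smul, inner_sum, inner_smul_right,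
      mul_comm]
  rw [ellpNorm_le_mul_ellpNorm_iff two_pos hC]
  simp only [hentry, Real.rpow_two]
  calc ∑ i, ‖inner ℂ (v i) (T (∑ j, a j • v j))‖ ^ 2 ≤ ‖T (∑ j, a j • v j)‖ ^ 2 :=
        hv.sum_inner_products_le _
    _ ≤ (C * ‖∑ j, a j • v j‖) ^ 2 := by
        gcongr
        exact hT _
    _ = C ^ 2 * ∑ j, ‖a j‖ ^ 2 := by rw [mul_pow, norm_sum_smul_sq_of_orthonormal hv]

variable {T : ℝ} [Fact (0 < T)]

lemma inner_fourierLp_holder_fourierLp (f : Lp ℂ ∞ (haarAddCircle (T := T))) (m n : ℤ) :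
    inner ℂ (fourierLp 2 m) ((ContinuousLinearMap.mul ℂ ℂ).holder 2 f (fourierLp 2 n)) =
      fourierCoeff f (m - n) := by
  rw [L2.inner_def, fourierCoeff]
  refine integral_congr_ae ?_
  filter_upwards [coeFn_fourierLp 2 m, coeFn_fourierLp 2 n,
    (ContinuousLinearMap.mul ℂ ℂ).coeFn_holder (r := 2) f (fourierLp 2 n)] with t hm hn hf
  rw [hm, hf, hn, RCLike.inner_apply', ← fourier_neg, ContinuousLinearMap.mul_apply', neg_sub,
    sub_eq_neg_add, fourier_add, smul_eq_mul]
  ring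

lemma lpBound_two_toeplitz {x : ι → ℤ} (hx : Function.Injective x) {f : AddCircle T → ℂ} {C : ℝ}
    (hf : AEStronglyMeasurable f haarAddCircle) (hC : ∀ t, ‖f t‖ ≤ C) :
    LpBound (of fun i j => fourierCoeff f (x i - x j)) 2 C := by
  have hf' := memLp_top_of_bound hf C (.of_forall hC)
  have hbound (g : Lp ℂ 2 (haarAddCircle (T := T))) :
      ‖(ContinuousLinearMap.mul ℂ ℂ).holder 2 hf'.toLp g‖ ≤ C * ‖g‖ := by
    refine Lp.norm_le_mul_norm_of_ae_le_mul ?_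
    filter_upwards [(ContinuousLinearMap.mul ℂ ℂ).coeFn_holder (r := 2) hf'.toLp g,
      hf'.coeFn_toLp] with t ht hft
    rw [ht, hft, ContinuousLinearMap.mul_apply', norm_mul]
    gcongr
    exact hC t
  convert lpBound_two_of_orthonormal (orthonormal_fourier.comp x hx)
    ((ContinuousLinearMap.mul ℂ ℂ).holderₗ haarAddCircle ∞ 2 2 hf'.toLp)
    ((norm_nonneg _).trans (hC 0)) hbound using 4 with i j
  rw [← fourierCoeff_congr_ae hf'.coeFn_toLp]
  exact (inner_fourierLp_holder_fourierLp _ _ _).symm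

end Toeplitz

section Sawtooth

/-- The function `π i (1 - 2 t)` on `[0, 1)`, whose Fourier coefficients are `1 / n`. -/
noncomputable def sawtooth (t : UnitAddCircle) : ℂ :=
  -(2 * π * Complex.I) * (periodizedBernoulli 1 t : ℂ)

lemma periodizedBernoulli_one (t : UnitAddCircle) :
    periodizedBernoulli 1 t = (measurableEquivIco 1 0 t : ℝ) - 1 / 2 :=
  bernoulliFun_one _

lemma measurable_sawtooth : Measurable sawtooth := by
  have : Measurable fun t : UnitAddCircle => (measurableEquivIco 1 0 t : ℝ) - 1 / 2 := by
    fun_prop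
  simp only [← periodizedBernoulli_one] at this
  exact (Complex.measurable_ofReal.comp this).const_mul _

lemma norm_sawtooth_le (t : UnitAddCircle) : ‖sawtooth t‖ ≤ π := by
  obtain ⟨h0, h1⟩ := (measurableEquivIco 1 0 t).2
  have hhalf : |periodizedBernoulli 1 t| ≤ 1 / 2 := by
    rw [periodizedBernoulli_one, abs_le]
    constructor <;> linarith
  calc ‖sawtooth t‖ = 2 * π * |periodizedBernoulli 1 t| := by
        simp [sawtooth, Real.pi_nonneg, abs_of_nonneg]
    _ ≤ 2 * π * (1 / 2) := by gcongr
    _ = π := by ring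

lemma fourierCoeff_sawtooth (n : ℤ) : fourierCoeff sawtooth n = (n : ℂ)⁻¹ := by
  have hπI : 2 * π * Complex.I ≠ 0 := by simp [Real.pi_ne_zero]
  calc fourierCoeff sawtooth n
      = -(2 * π * Complex.I) * fourierCoeff (Complex.ofReal ∘ periodizedBernoulli 1) n :=
        fourierCoeff.const_mul _ _ _
    _ = (2 * π * Complex.I) / (2 * π * Complex.I * n) := by
        rw [fourierCoeff_bernoulli_eq one_ne_zero, pow_one, Nat.factorial_one, Nat.cast_one]
        ring
    _ = (n : ℂ)⁻¹ := by rw [div_mul_cancel_left₀ hπI]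

lemma lpBound_hilbertMatrix_two {ι : Type*} [Fintype ι] {x : ι → ℤ} (hx : Function.Injective x) :
    LpBound (hilbertMatrix fun i => (x i : ℂ)) 2 π := by
  simpa only [hilbertMatrix, fourierCoeff_sawtooth, Int.cast_sub] using
    lpBound_two_toeplitz hx measurable_sawtooth.aestronglyMeasurable norm_sawtooth_le

end Sawtooth

section AllExponents

variable {ι : Type*} [Fintype ι]

lemma LpBound.of_transpose_eq_neg {M : Matrix ι ι ℂ} {p q P Q C : ℝ} (hM : Mᵀ = -M) (hC : 0 ≤ C)
    (hP : LpBound M P C) (hPQ : P.HolderConjugate Q) (hpq : p.HolderConjugate q) (hp : p ≤ P)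
    (hq : q ≤ P) : LpBound M p C := by
  have hPQsum := hPQ.inv_add_inv_eq_one
  have hpqsum := hpq.inv_add_inv_eq_one
  have hform := hP.formBound hPQ
  have hdual : FormBound M Q P C := by simpa only [hM, neg_neg] using hform.transpose.neg
  have hmem : p⁻¹ ∈ segment ℝ P⁻¹ Q⁻¹ := by
    have hpP := inv_anti₀ hpq.pos hp
    have hqP := inv_anti₀ hpq.symm.pos hq
    rw [segment_eq_Icc (by linarith)]
    constructor <;> linarith
  rw [segment_eq_image] at hmem
  obtain ⟨θ, hθ, hpθ⟩ := hmem
  simp only [smul_eq_mul] at hpθ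
  have hqθ : (1 - θ) * Q⁻¹ + θ * P⁻¹ = q⁻¹ := by linear_combination hPQsum - hpqsum - hpθ
  have hint := hform.interpolate hdual hC hC hPQ.pos hPQ.symm.pos hPQ.symm.pos hPQ.pos hpq.pos
    hpq.symm.pos hθ hpθ hqθ
  rw [← Real.rpow_add' hC (by simp), sub_add_cancel, Real.rpow_one] at hint
  exact hint.lpBound hpq hC

variable {x : ι → ℤ}

lemma lpBound_hilbertMatrix_two_pow (hx : Function.Injective x) (k : ℕ) :
    LpBound (hilbertMatrix fun i => (x i : ℂ)) (2 ^ (k + 1)) ((2 ^ (k + 1) - 1) * π) := by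
  induction k with
  | zero => simpa [show (2 : ℝ) - 1 = 1 by norm_num] using lpBound_hilbertMatrix_two hx
  | succ k ih =>
    have hpow : (1 : ℝ) ≤ 2 ^ (k + 1) := one_le_pow₀ one_le_two
    have hdouble := ih.hilbertMatrix_two_mul (Int.cast_injective.comp hx) hpow
      (mul_nonneg (sub_nonneg.2 hpow) Real.pi_nonneg) (by positivity)
      fun i => sum_norm_inv_intCast_sub_sq_le hx (x i)
    have hconst : 2 * ((2 ^ (k + 1) - 1) * π) + π = (2 ^ (k + 1 + 1) - 1) * π := by ring
    rwa [mul_div_cancel₀ _ three_ne_zero, Real.sqrt_sq Real.pi_nonneg, ← pow_succ', hconst]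
      at hdouble

lemma lpBound_hilbertMatrix {p q : ℝ} (hx : Function.Injective x) (hpq : p.HolderConjugate q)
    {k : ℕ} (hp : p ≤ 2 ^ (k + 1)) (hq : q ≤ 2 ^ (k + 1)) :
    LpBound (hilbertMatrix fun i => (x i : ℂ)) p ((2 ^ (k + 1) - 1) * π) := by
  have hpow : (1 : ℝ) < 2 ^ (k + 1) := one_lt_pow₀ one_lt_two k.succ_ne_zero
  exact (lpBound_hilbertMatrix_two_pow hx k).of_transpose_eq_neg (hilbertMatrix_transpose _)
    (mul_nonneg (sub_nonneg.2 hpow.le) Real.pi_nonneg) (.conjExponent hpow) hpq hp hq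

end AllExponents

section InfiniteMatrices

lemma sum_norm_tsum_mul_rpow_le {ι : Type*} {K : ι → ι → ℂ} {p C : ℝ} (hp : 0 < p) (hC : 0 ≤ C)
    (hK : ∀ s : Finset ι, LpBound (of fun i j : s => K i j) p C) {a : ι → ℂ}
    (ha : Summable fun j => ‖a j‖ ^ p) (hrow : ∀ i, Summable fun j => K i j * a j) (t : Finset ι) :
    ∑ i ∈ t, ‖∑' j, K i j * a j‖ ^ p ≤ C ^ p * ∑' j, ‖a j‖ ^ p := by
  have hsection (s : Finset ι) : ∑ i ∈ s, ‖∑ j ∈ s, K i j * a j‖ ^ p ≤ C ^ p * ∑' j, ‖a j‖ ^ p :=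
    calc ∑ i ∈ s, ‖∑ j ∈ s, K i j * a j‖ ^ p ≤ C ^ p * ∑ j ∈ s, ‖a j‖ ^ p := by
          simp only [← Finset.sum_coe_sort s]
          exact (ellpNorm_le_mul_ellpNorm_iff hp hC).1 (hK s fun j => a j)
      _ ≤ C ^ p * ∑' j, ‖a j‖ ^ p := by
          gcongr
          exact ha.sum_le_tsum s fun j _ => by positivity
  have hlim : Tendsto (fun s => ∑ i ∈ t, ‖∑ j ∈ s, K i j * a j‖ ^ p) atTop
      (𝓝 (∑ i ∈ t, ‖∑' j, K i j * a j‖ ^ p)) :=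
    tendsto_finsetSum t fun i _ => (hrow i).hasSum.norm.rpow_const (.inr hp.le)
  refine le_of_tendsto hlim ?_
  filter_upwards [eventually_ge_atTop t] with s hts
  exact (Finset.sum_le_sum_of_subset_of_nonneg hts fun i _ _ => by positivity).trans (hsection s)

lemma summable_inv_intCast_sub_mul {p : ℝ} (hp : 1 < p) {a : ℤ → ℂ}
    (ha : Summable fun m => ‖a m‖ ^ p) (n : ℤ) : Summable fun m : ℤ => ((n : ℂ) - m)⁻¹ * a m := by
  have hpq := (Real.HolderConjugate.conjExponent hp).symm
  have hker : Summable fun m : ℤ => ‖((n : ℂ) - m)⁻¹‖ ^ p.conjExponent := by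
    refine ((Equiv.subLeft n).summable_iff.2 (Real.summable_abs_int_rpow hpq.lt)).congr fun m => ?_
    rw [Function.comp_apply, Equiv.subLeft_apply, ← Int.cast_sub, norm_inv, Complex.norm_intCast,
      Real.rpow_neg (abs_nonneg _), Real.inv_rpow (abs_nonneg _)]
  refine .of_norm ?_
  simpa only [norm_mul] using Real.summable_mul_of_Lp_Lq_of_nonneg hpq (fun _ => norm_nonneg _)
    (fun _ => norm_nonneg _) hker ha

lemma tsum_ite_div_intCast_eq (a : ℤ → ℂ) (n : ℤ) :
    ∑' j : ℤ, (if j = 0 then 0 else a (n - j) / (j : ℂ)) = ∑' m : ℤ, ((n : ℂ) - m)⁻¹ * a m := by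
  rw [← (Equiv.subLeft n).tsum_eq fun m : ℤ => ((n : ℂ) - m)⁻¹ * a m]
  refine tsum_congr fun j => ?_
  rw [Equiv.subLeft_apply, Int.cast_sub, sub_sub_cancel]
  split_ifs with hj
  · simp [hj]
  · rw [div_eq_inv_mul]

end InfiniteMatrices

/-- the discrete Hilbert transform, convolution with the kernel `(1/j)_{j≠0}`,
is bounded on `ℓ^p(ℤ)` for `1 < p < ∞`. -/
theorem discrete_hilbert_transform_bounded (p : ℝ) (hp : 1 < p) :
    ∃ C : ℝ, 0 < C ∧ ∀ a : ℤ → ℂ, Summable (fun n => ‖a n‖ ^ p) →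
      (∑' n : ℤ, ‖∑' j : ℤ, if j = 0 then 0 else a (n - j) / (j : ℂ)‖ ^ p) ≤
        C * ∑' n : ℤ, ‖a n‖ ^ p := by
  obtain ⟨k, hk⟩ := pow_unbounded_of_one_lt (max p p.conjExponent) one_lt_two
  have hle : max p p.conjExponent ≤ 2 ^ (k + 1) :=
    hk.le.trans (pow_le_pow_right₀ one_le_two k.le_succ)
  have hC : 0 < ((2 : ℝ) ^ (k + 1) - 1) * π :=
    mul_pos (sub_pos.2 (one_lt_pow₀ one_lt_two k.succ_ne_zero)) Real.pi_pos
  have hsection (s : Finset ℤ) : LpBound (of fun i j : s => ((i : ℂ) - (j : ℂ))⁻¹) p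
      ((2 ^ (k + 1) - 1) * π) :=
    lpBound_hilbertMatrix Subtype.val_injective (.conjExponent hp) ((le_max_left _ _).trans hle)
      ((le_max_right _ _).trans hle)
  refine ⟨((2 ^ (k + 1) - 1) * π) ^ p, Real.rpow_pos_of_pos hC p, fun a ha => ?_⟩
  simp only [tsum_ite_div_intCast_eq]
  exact Real.tsum_le_of_sum_le (fun n => by positivity) fun t =>
    sum_norm_tsum_mul_rpow_le (K := fun n m : ℤ => ((n : ℂ) - m)⁻¹) (one_pos.trans hp) hC.le
      hsection ha (summable_inv_intCast_sub_mul hp ha) t
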